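/- arXiv:2310.02666 — 7 statements merged into one kernel-verified Lean document; each statement's English description precedes it below -/
import Mathlib

section
/- Let Ψ(c,x) = 320 + ψ1(c) + ψ2(c)x + ψ3(c)x² + ψ4(c)x³ + ψ5(c)x⁴. Then Ψ(c,x) ≤ 320 for all real c, x with 0 ≤ c ≤ 87137/250000 and 0 < x < 1/4. -/
/-!
On the edge `x = 1` the polynomial is `Ψ(c,1) = 320 - 60c² + 4c⁴(4 - c²) ≤ 320 - 44c²`, and the
difference `Ψ(c,1) - Ψ(c,x)` is divisible by `(4 - c²)(1 - x)`. The quotient may be negative, but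
completing two squares, one in `(x, c)` and one in `(c², c)`, bounds it below by `-(7 + 19x)c²`.
Hence passing from `(c,1)` to `(c,x)` raises `Ψ` by at most `4 · 9c²`, which the margin `44c²`
absorbs.
-/

theorem binary_quadratic_form_nonneg {R : Type*} [CommRing R] [LinearOrder R]
    [IsStrictOrderedRing R] {a b d : R} (ha : 0 < a) (hdisc : b ^ 2 ≤ 4 * a * d) (u v : R) :
    0 ≤ a * u ^ 2 + b * (u * v) + d * v ^ 2 := by
  refine nonneg_of_mul_nonneg_right (a := 4 * a) ?_ (by positivity)
  calc
    0 ≤ (2 * a * u + b * v) ^ 2 + (4 * a * d - b ^ 2) * v ^ 2 :=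
      add_nonneg (sq_nonneg _) (mul_nonneg (sub_nonneg.2 hdisc) (sq_nonneg v))
    _ = 4 * a * (a * u ^ 2 + b * (u * v) + d * v ^ 2) := by ring

section

variable {K : Type*} [Field K]

/-- The polynomial `Ψ(c, x)`, as a quartic in `x` with the coefficients `320 + ψ₁(c)`, `ψ₂(c)`, …,
`ψ₅(c)` written out. -/
def Psi (c x : K) : K :=
  320 + (-160 * c ^ 2 + 16 * c ^ 3 + 20 * c ^ 4 - 4 * c ^ 5 + (5 / 4) * c ^ 6) +
    (32 * c + 48 * c ^ 2 + 32 * c ^ 3 + 14 * c ^ 4 - 10 * c ^ 5 - (13 / 2) * c ^ 6) * x +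
    (-256 + 64 * c + 276 * c ^ 2 - 48 * c ^ 3 - 82 * c ^ 4 + 8 * c ^ 5 + (29 / 4) * c ^ 6) * x ^ 2 +
    (320 - 32 * c - 272 * c ^ 2 - 32 * c ^ 3 + 76 * c ^ 4 + 10 * c ^ 5 - 7 * c ^ 6) * x ^ 3 +
    (-64 - 64 * c + 48 * c ^ 2 + 32 * c ^ 3 - 12 * c ^ 4 - 4 * c ^ 5 + c ^ 6) * x ^ 4

/-- The quotient of `Ψ(c, 1) - Ψ(c, x)` by `(4 - c²)(1 - x)`, arranged by powers of `c`. -/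
def PsiQuotient (c x : K) : K :=
  16 * (4 - x) * x ^ 2 - 8 * ((1 + x) * (1 + 2 * x)) * (x * c) +
    (25 + 13 * x - 40 * x ^ 2 + 8 * x ^ 3) * c ^ 2 -
    2 * ((1 + x) * (2 + 5 * x - 2 * x ^ 2)) * c ^ 3 +
    (21 / 4 - 5 / 4 * x + 6 * x ^ 2 - x ^ 3) * c ^ 4

theorem Psi_eq_Psi_one_sub [CharZero K] (c x : K) :
    Psi c x = Psi c 1 - (4 - c ^ 2) * ((1 - x) * PsiQuotient c x) := by
  simp only [Psi, PsiQuotient]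
  ring

variable [LinearOrder K] [IsStrictOrderedRing K]

theorem Psi_one_le (c : K) : Psi c 1 ≤ 320 - 44 * c ^ 2 :=
  calc
    Psi c 1 = 320 - 44 * c ^ 2 - 4 * (c * (c ^ 2 - 2)) ^ 2 := by
      simp only [Psi]
      ring
    _ ≤ 320 - 44 * c ^ 2 := sub_le_self _ (by positivity)

section

variable {x : K}

theorem neg_twelve_mul_sq_le_PsiQuotient_head (hx0 : 0 ≤ x) (hx1 : x ≤ 1) (c : K) :
    -12 * c ^ 2 ≤ 16 * (4 - x) * x ^ 2 - 8 * ((1 + x) * (1 + 2 * x)) * (x * c) := by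
  have hcoeff : (1 + x) * (1 + 2 * x) ≤ 6 := by nlinarith
  have hdisc : (-8 * ((1 + x) * (1 + 2 * x))) ^ 2 ≤ 4 * 48 * 12 := by
    have := pow_le_pow_left₀ (by positivity) hcoeff 2
    linarith
  have hform := binary_quadratic_form_nonneg (by norm_num) hdisc x c
  have hlead : 48 * x ^ 2 ≤ 16 * (4 - x) * x ^ 2 :=
    mul_le_mul_of_nonneg_right (by linarith) (sq_nonneg x)
  linarith

theorem neg_twenty_mul_sq_le_PsiQuotient_tail (hx0 : 0 ≤ x) (hx1 : x ≤ 1) (c : K) :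
    -20 * c ^ 2 ≤ (21 / 4 - 5 / 4 * x + 6 * x ^ 2 - x ^ 3) * c ^ 4 -
      2 * ((1 + x) * (2 + 5 * x - 2 * x ^ 2)) * c ^ 3 := by
  have hcoeff_nonneg : 0 ≤ (1 + x) * (2 + 5 * x - 2 * x ^ 2) :=
    mul_nonneg (by linarith) (by nlinarith)
  have hcoeff : (1 + x) * (2 + 5 * x - 2 * x ^ 2) ≤ 10 :=
    calc
      (1 + x) * (2 + 5 * x - 2 * x ^ 2) ≤ 2 * 5 :=
        mul_le_mul (by linarith) (by nlinarith) (by nlinarith) zero_le_two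
      _ = 10 := by norm_num
  have hdisc : (-2 * ((1 + x) * (2 + 5 * x - 2 * x ^ 2))) ^ 2 ≤ 4 * 5 * 20 := by
    have := pow_le_pow_left₀ hcoeff_nonneg hcoeff 2
    linarith
  have hform := binary_quadratic_form_nonneg (by norm_num) hdisc (c ^ 2) c
  have hlead : 5 ≤ 21 / 4 - 5 / 4 * x + 6 * x ^ 2 - x ^ 3 := by
    nlinarith [mul_nonneg (sq_nonneg x) (sub_nonneg.2 hx1), sq_nonneg (8 * x - 1)]
  have := mul_le_mul_of_nonneg_right hlead (by positivity : 0 ≤ c ^ 4)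
  linarith

theorem neg_mul_sq_le_PsiQuotient (hx0 : 0 ≤ x) (hx1 : x ≤ 1) (c : K) :
    -(7 + 19 * x) * c ^ 2 ≤ PsiQuotient c x := by
  have hmid : 25 - 19 * x ≤ 25 + 13 * x - 40 * x ^ 2 + 8 * x ^ 3 := by
    have : 0 ≤ 8 * x * ((1 - x) * (4 - x)) :=
      mul_nonneg (by positivity) (mul_nonneg (by linarith) (by linarith))
    linarith
  have hmid_sq := mul_le_mul_of_nonneg_right hmid (sq_nonneg c)
  have hhead := neg_twelve_mul_sq_le_PsiQuotient_head hx0 hx1 c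
  have htail := neg_twenty_mul_sq_le_PsiQuotient_tail hx0 hx1 c
  simp only [PsiQuotient]
  linarith

theorem neg_nine_mul_sq_le_one_sub_mul_PsiQuotient (hx0 : 0 ≤ x) (hx1 : x ≤ 1) (c : K) :
    -9 * c ^ 2 ≤ (1 - x) * PsiQuotient c x :=
  calc
    -9 * c ^ 2 ≤ (1 - x) * -(7 + 19 * x) * c ^ 2 :=
      mul_le_mul_of_nonneg_right (by nlinarith [sq_nonneg (19 * x - 6)]) (sq_nonneg c)
    _ = (1 - x) * (-(7 + 19 * x) * c ^ 2) := by ring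
    _ ≤ (1 - x) * PsiQuotient c x :=
      mul_le_mul_of_nonneg_left (neg_mul_sq_le_PsiQuotient hx0 hx1 c) (sub_nonneg.2 hx1)

end

theorem Psi_le_320_small_c_general {c x : K} (hc : |c| ≤ 2) (hx0 : 0 ≤ x) (hx1 : x ≤ 1) :
    Psi c x ≤ 320 := by
  have hc_sq : c ^ 2 ≤ 4 := by
    have := sq_le_sq.2 (hc.trans (le_abs_self 2))
    linarith
  have hgain := neg_nine_mul_sq_le_one_sub_mul_PsiQuotient hx0 hx1 c
  calc
    Psi c x = Psi c 1 - (4 - c ^ 2) * ((1 - x) * PsiQuotient c x) := Psi_eq_Psi_one_sub c x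
    _ ≤ 320 - 44 * c ^ 2 - (4 - c ^ 2) * (-9 * c ^ 2) :=
      sub_le_sub (Psi_one_le c) (mul_le_mul_of_nonneg_left hgain (sub_nonneg.2 hc_sq))
    _ = 320 - (8 * c ^ 2 + 9 * c ^ 4) := by ring
    _ ≤ 320 := sub_le_self _ (by positivity)

end

theorem Psi_le_320_small_c (c x : ℝ) (hc0 : 0 ≤ c) (hc1 : c ≤ 87137 / 250000)
    (hx0 : 0 < x) (hx1 : x < 1 / 4) :
    320 + (-160 * c ^ 2 + 16 * c ^ 3 + 20 * c ^ 4 - 4 * c ^ 5 + (5 / 4) * c ^ 6) +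
      (32 * c + 48 * c ^ 2 + 32 * c ^ 3 + 14 * c ^ 4 - 10 * c ^ 5 - (13 / 2) * c ^ 6) * x +
      (-256 + 64 * c + 276 * c ^ 2 - 48 * c ^ 3 - 82 * c ^ 4 + 8 * c ^ 5 + (29 / 4) * c ^ 6) * x ^ 2 +
      (320 - 32 * c - 272 * c ^ 2 - 32 * c ^ 3 + 76 * c ^ 4 + 10 * c ^ 5 - 7 * c ^ 6) * x ^ 3 +
      (-64 - 64 * c + 48 * c ^ 2 + 32 * c ^ 3 - 12 * c ^ 4 - 4 * c ^ 5 + c ^ 6) * x ^ 4 ≤ 320 :=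
  Psi_le_320_small_c_general (abs_le.2 ⟨by linarith, by linarith⟩) hx0.le (by linarith)
end

section
/- Let Γ(c,x) = γ1(x) + γ2(x)c + γ3(x)c² + γ4(x)c³ + γ5(x)c⁴ + γ6(x)c⁵ + γ7(x)c⁶, where γ1(x) = -256x² + 320x³ - 64x⁴, γ2(x) = 96x² - 32x³ - 64x⁴, γ3(x) = 164x² - 272x³ + 48x⁴, γ4(x) = -32x³ + 32x⁴, γ5(x) = -48x² + 76x³ - 12x⁴, γ6(x) = -6x² + 10x³ - 4x⁴, γ7(x) = 2x² - 7x³ + x⁴. Then Γ(c,x) < 0 for all real c, x with 87137/250000 < c ≤ 1 and 3/5 ≤ x < 1. -/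
/-!
Up to the factor `-x²`, `Γ(c,x)` is a quadratic in `s = (4 - c²)(1 - x)`. For `0 ≤ c ≤ 1` its
constant term is at least `36c²` and its leading coefficient at least `4`, so the square
`4(s - 3c)²` can be split off. This adds `24c` to the coefficient of `s`, which by itself is
negative for `c` near `1`, and makes it positive on all of `[0, 1]`.
-/

section CommRing

variable {R : Type*} [CommRing R]

/-- The polynomial `Γ(c,x)`, over an arbitrary commutative ring. -/
def Gamma (c x : R) : R :=
  (-256 * x ^ 2 + 320 * x ^ 3 - 64 * x ^ 4) +
    (96 * x ^ 2 - 32 * x ^ 3 - 64 * x ^ 4) * c +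
    (164 * x ^ 2 - 272 * x ^ 3 + 48 * x ^ 4) * c ^ 2 +
    (-32 * x ^ 3 + 32 * x ^ 4) * c ^ 3 +
    (-48 * x ^ 2 + 76 * x ^ 3 - 12 * x ^ 4) * c ^ 4 +
    (-6 * x ^ 2 + 10 * x ^ 3 - 4 * x ^ 4) * c ^ 5 +
    (2 * x ^ 2 - 7 * x ^ 3 + x ^ 4) * c ^ 6

/-- The polynomial `Ψ(c,s)`, which is `-Γ(c,x) / x²` in the variable `s = (4 - c²)(1 - x)`. -/
def reducedGamma (c s : R) : R :=
  4 * c ^ 2 * (c ^ 4 - 4 * c ^ 2 + 15) +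
    (48 - 40 * c - 32 * c ^ 2 - 2 * c ^ 3 + 5 * c ^ 4) * s +
    (4 + 4 * c - c ^ 2) * s ^ 2

theorem Gamma_eq_neg_sq_mul_reducedGamma (c x : R) :
    Gamma c x = -(x ^ 2 * reducedGamma c ((4 - c ^ 2) * (1 - x))) := by
  unfold Gamma reducedGamma
  ring

theorem reducedGamma_eq_add_four_mul_sq (c s : R) :
    reducedGamma c s =
      4 * c ^ 2 * ((c ^ 2 - 2) ^ 2 + 2) + 4 * (s - 3 * c) ^ 2 + c * (4 - c) * s ^ 2 +
        (48 - 16 * c - 32 * c ^ 2 - 2 * c ^ 3 + 5 * c ^ 4) * s := by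
  unfold reducedGamma
  ring

end CommRing

section OrderedRing

variable {R : Type*} [CommRing R] [LinearOrder R] [IsStrictOrderedRing R] {c s x : R}

theorem quartic_coeff_pos (hc0 : 0 ≤ c) (hc1 : c ≤ 1) :
    0 < 48 - 16 * c - 32 * c ^ 2 - 2 * c ^ 3 + 5 * c ^ 4 := by
  have hc2 : c ^ 2 ≤ 1 := pow_le_one₀ hc0 hc1
  have hc3 : c ^ 3 ≤ 1 := pow_le_one₀ hc0 hc1
  have hcofactor : 0 ≤ 45 + 29 * c - 3 * c ^ 2 - 5 * c ^ 3 := by linarith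
  calc
    0 < 3 + (1 - c) * (45 + 29 * c - 3 * c ^ 2 - 5 * c ^ 3) :=
      add_pos_of_pos_of_nonneg three_pos (mul_nonneg (sub_nonneg.2 hc1) hcofactor)
    _ = 48 - 16 * c - 32 * c ^ 2 - 2 * c ^ 3 + 5 * c ^ 4 := by ring

theorem reducedGamma_pos (hc0 : 0 ≤ c) (hc1 : c ≤ 1) (hs : 0 < s) : 0 < reducedGamma c s := by
  have hlinear : 0 < (48 - 16 * c - 32 * c ^ 2 - 2 * c ^ 3 + 5 * c ^ 4) * s :=
    mul_pos (quartic_coeff_pos hc0 hc1) hs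
  have hc4 : 0 ≤ 4 - c := by linarith
  rw [reducedGamma_eq_add_four_mul_sq]
  positivity

theorem Gamma_neg_general (hc0 : 0 ≤ c) (hc1 : c ≤ 1) (hx0 : x ≠ 0) (hx1 : x < 1) :
    Gamma c x < 0 := by
  have hc2 : c ^ 2 ≤ 1 := pow_le_one₀ hc0 hc1
  have hs : 0 < (4 - c ^ 2) * (1 - x) := mul_pos (by linarith) (sub_pos.2 hx1)
  rw [Gamma_eq_neg_sq_mul_reducedGamma, neg_lt_zero]
  exact mul_pos (sq_pos_of_ne_zero hx0) (reducedGamma_pos hc0 hc1 hs)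

end OrderedRing

theorem Gamma_neg (c x : ℝ) (hc0 : 87137 / 250000 < c) (hc1 : c ≤ 1)
    (hx0 : 3 / 5 ≤ x) (hx1 : x < 1) :
    (-256 * x ^ 2 + 320 * x ^ 3 - 64 * x ^ 4) +
      (96 * x ^ 2 - 32 * x ^ 3 - 64 * x ^ 4) * c +
      (164 * x ^ 2 - 272 * x ^ 3 + 48 * x ^ 4) * c ^ 2 +
      (-32 * x ^ 3 + 32 * x ^ 4) * c ^ 3 +
      (-48 * x ^ 2 + 76 * x ^ 3 - 12 * x ^ 4) * c ^ 4 +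
      (-6 * x ^ 2 + 10 * x ^ 3 - 4 * x ^ 4) * c ^ 5 +
      (2 * x ^ 2 - 7 * x ^ 3 + x ^ 4) * c ^ 6 < 0 :=
  Gamma_neg_general (by linarith) hc1 (by linarith) hx1
end

section
/- Let Ψ(c,x) = 320 + ψ1(c) + ψ2(c)x + ψ3(c)x² + ψ4(c)x³ + ψ5(c)x⁴. Then Ψ(c,x) ≤ 320 for all real c, x with 4511/4000 < c ≤ 2 and 0 ≤ x ≤ 1. -/
/-!
Written in the Bernstein basis `xᵏ (1 - x)⁴⁻ᵏ`, the quartic `Ψ(c, ·) - 320` has coefficients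
`b₀, …, b₄` that are polynomials in `c`. For `|c| ≤ 2` all of them are nonpositive except `b₁`,
which is slightly positive for small `c > 0`. Since `b₀ ≤ -60 c²`, `b₁ ≤ 32 c` and `b₂ ≤ -176`, the
sum of the first three terms is still at most `(1 - x)²` times the negative definite quadratic form
`-60 u² + 32 u x - 176 x²` in `u = c (1 - x)` and `x`.

The bounds on the `bₖ` come from separating the parts of `bₖ` even and odd in `c` and dividing by
`4 - c²`: the odd parts of `b₀`, `b₂` and `b₃` vanish at `c = ± 2`. In `b₂` and `b₃` the estimate
`2 c ≤ 1 + c²` then reduces the odd part to an even one, which leaves a quadratic in `c²`.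
-/

section Bernstein

variable {R : Type*} [CommRing R] [PartialOrder R] [IsOrderedRing R]

lemma quartic_nonpos_of_bernstein {a₀ a₁ a₂ a₃ a₄ x : R} (hx0 : 0 ≤ x) (hx1 : x ≤ 1)
    (h₀₁₂ : a₀ * (1 - x) ^ 2 + (4 * a₀ + a₁) * (x * (1 - x)) +
      (6 * a₀ + 3 * a₁ + a₂) * x ^ 2 ≤ 0)
    (h₃ : 4 * a₀ + 3 * a₁ + 2 * a₂ + a₃ ≤ 0) (h₄ : a₀ + a₁ + a₂ + a₃ + a₄ ≤ 0) :
    a₀ + a₁ * x + a₂ * x ^ 2 + a₃ * x ^ 3 + a₄ * x ^ 4 ≤ 0 := by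
  have hy : 0 ≤ 1 - x := sub_nonneg.2 hx1
  calc a₀ + a₁ * x + a₂ * x ^ 2 + a₃ * x ^ 3 + a₄ * x ^ 4
      = (1 - x) ^ 2 * (a₀ * (1 - x) ^ 2 + (4 * a₀ + a₁) * (x * (1 - x)) +
            (6 * a₀ + 3 * a₁ + a₂) * x ^ 2) +
          x ^ 3 * (1 - x) * (4 * a₀ + 3 * a₁ + 2 * a₂ + a₃) +
          x ^ 4 * (a₀ + a₁ + a₂ + a₃ + a₄) := by ring
    _ ≤ 0 := add_nonpos (add_nonpos
          (mul_nonpos_of_nonneg_of_nonpos (pow_nonneg hy 2) h₀₁₂)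
          (mul_nonpos_of_nonneg_of_nonpos (mul_nonneg (pow_nonneg hx0 3) hy) h₃))
          (mul_nonpos_of_nonneg_of_nonpos (pow_nonneg hx0 4) h₄)

end Bernstein

/-- The paper's `ψ₁`: the constant coefficient of `Ψ(c, ·) - 320`. -/
noncomputable def psi₁ (c : ℝ) : ℝ :=
  -160 * c ^ 2 + 16 * c ^ 3 + 20 * c ^ 4 - 4 * c ^ 5 + (5 / 4) * c ^ 6

/-- The paper's `ψ₂`: the coefficient of `x` in `Ψ(c, x)`. -/
noncomputable def psi₂ (c : ℝ) : ℝ :=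
  32 * c + 48 * c ^ 2 + 32 * c ^ 3 + 14 * c ^ 4 - 10 * c ^ 5 - (13 / 2) * c ^ 6

/-- The paper's `ψ₃`: the coefficient of `x²` in `Ψ(c, x)`. -/
noncomputable def psi₃ (c : ℝ) : ℝ :=
  -256 + 64 * c + 276 * c ^ 2 - 48 * c ^ 3 - 82 * c ^ 4 + 8 * c ^ 5 + (29 / 4) * c ^ 6

/-- The paper's `ψ₄`: the coefficient of `x³` in `Ψ(c, x)`. -/
noncomputable def psi₄ (c : ℝ) : ℝ :=
  320 - 32 * c - 272 * c ^ 2 - 32 * c ^ 3 + 76 * c ^ 4 + 10 * c ^ 5 - 7 * c ^ 6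

/-- The paper's `ψ₅`: the coefficient of `x⁴` in `Ψ(c, x)`. -/
noncomputable def psi₅ (c : ℝ) : ℝ :=
  -64 - 64 * c + 48 * c ^ 2 + 32 * c ^ 3 - 12 * c ^ 4 - 4 * c ^ 5 + c ^ 6

section BernsteinCoefficients

variable {c x : ℝ}

lemma four_sub_sq_nonneg (hc : |c| ≤ 2) : 0 ≤ 4 - c ^ 2 := by
  nlinarith [abs_le.1 hc]

lemma psi₁_le_neg_mul_sq (hc : |c| ≤ 2) : psi₁ c ≤ -60 * c ^ 2 := by
  have hquad : 0 ≤ 5 / 4 * c ^ 2 - 4 * c + 25 := by nlinarith [sq_nonneg (c - 2)]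
  calc psi₁ c
      = -60 * c ^ 2 - c ^ 2 * ((4 - c ^ 2) * (5 / 4 * c ^ 2 - 4 * c + 25)) := by
        rw [psi₁]; ring
    _ ≤ -60 * c ^ 2 :=
        sub_le_self _ (mul_nonneg (sq_nonneg c) (mul_nonneg (four_sub_sq_nonneg hc) hquad))

lemma four_mul_psi₁_add_psi₂_le_mul (hc : |c| ≤ 2) : 4 * psi₁ c + psi₂ c ≤ 32 * c := by
  obtain ⟨hc_lower, hc_upper⟩ := abs_le.1 hc
  have hsq : 0 ≤ 4 - c ^ 2 := four_sub_sq_nonneg hc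
  have hlin : 0 ≤ 240 + 8 * c := by linarith
  have hquad : 0 ≤ 88 - 26 * c - 3 / 2 * c ^ 2 := by linarith
  calc 4 * psi₁ c + psi₂ c
      = 32 * c - c ^ 2 * (240 + 8 * c + (4 - c ^ 2) * (88 - 26 * c - 3 / 2 * c ^ 2)) := by
        rw [psi₁, psi₂]; ring
    _ ≤ 32 * c :=
        sub_le_self _ (mul_nonneg (sq_nonneg c) (add_nonneg hlin (mul_nonneg hsq hquad)))

lemma six_mul_psi₁_add_three_mul_psi₂_add_psi₃_le (hc : |c| ≤ 2) :
    6 * psi₁ c + 3 * psi₂ c + psi₃ c ≤ -176 := by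
  have hodd : 0 ≤ (4 - c ^ 2) * ((20 + 23 * c ^ 2) * (1 - c) ^ 2) :=
    mul_nonneg (four_sub_sq_nonneg hc) (by positivity)
  have heven : 0 ≤ 388 - 129 * c ^ 2 + 111 / 4 * (c ^ 2) ^ 2 := by
    nlinarith [sq_nonneg (c ^ 2 - 2)]
  calc 6 * psi₁ c + 3 * psi₂ c + psi₃ c
      = -176 - ((4 - c ^ 2) * ((20 + 23 * c ^ 2) * (1 - c) ^ 2) +
          c ^ 2 * (388 - 129 * c ^ 2 + 111 / 4 * (c ^ 2) ^ 2)) := by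
        rw [psi₁, psi₂, psi₃]; ring
    _ ≤ -176 := sub_le_self _ (add_nonneg hodd (mul_nonneg (sq_nonneg c) heven))

lemma four_mul_psi₁_add_three_mul_psi₂_add_two_mul_psi₃_add_psi₄_le (hc : |c| ≤ 2) :
    4 * psi₁ c + 3 * psi₂ c + 2 * psi₃ c + psi₄ c ≤ -96 := by
  have hodd : 0 ≤ (4 - c ^ 2) * ((24 + 10 * c ^ 2) * (1 - c) ^ 2) :=
    mul_nonneg (four_sub_sq_nonneg hc) (by positivity)
  have heven : 0 ≤ 104 - 40 * c ^ 2 + 17 * (c ^ 2) ^ 2 := by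
    nlinarith [sq_nonneg (c ^ 2 - 1)]
  calc 4 * psi₁ c + 3 * psi₂ c + 2 * psi₃ c + psi₄ c
      = -96 - ((4 - c ^ 2) * ((24 + 10 * c ^ 2) * (1 - c) ^ 2) +
          c ^ 2 * (104 - 40 * c ^ 2 + 17 * (c ^ 2) ^ 2)) := by
        rw [psi₁, psi₂, psi₃, psi₄]; ring
    _ ≤ -96 := sub_le_self _ (add_nonneg hodd (mul_nonneg (sq_nonneg c) heven))

lemma sum_psi_nonpos (c : ℝ) : psi₁ c + psi₂ c + psi₃ c + psi₄ c + psi₅ c ≤ 0 := by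
  calc psi₁ c + psi₂ c + psi₃ c + psi₄ c + psi₅ c
      = -(4 * c ^ 2 * ((c ^ 2 - 2) ^ 2 + 11)) := by
        rw [psi₁, psi₂, psi₃, psi₄, psi₅]; ring
    _ ≤ 0 := neg_nonpos.2 (by positivity)

lemma initial_bernstein_form_nonpos (hc : |c| ≤ 2) (hx0 : 0 ≤ x) (hx1 : x ≤ 1) :
    psi₁ c * (1 - x) ^ 2 + (4 * psi₁ c + psi₂ c) * (x * (1 - x)) +
      (6 * psi₁ c + 3 * psi₂ c + psi₃ c) * x ^ 2 ≤ 0 := by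
  have : 0 ≤ x * (1 - x) := mul_nonneg hx0 (sub_nonneg.2 hx1)
  calc psi₁ c * (1 - x) ^ 2 + (4 * psi₁ c + psi₂ c) * (x * (1 - x)) +
        (6 * psi₁ c + 3 * psi₂ c + psi₃ c) * x ^ 2
      ≤ -60 * c ^ 2 * (1 - x) ^ 2 + 32 * c * (x * (1 - x)) + -176 * x ^ 2 := by
        gcongr
        · exact psi₁_le_neg_mul_sq hc
        · exact four_mul_psi₁_add_psi₂_le_mul hc
        · exact six_mul_psi₁_add_three_mul_psi₂_add_psi₃_le hc
    _ = -(44 * (c * (1 - x)) ^ 2 + 16 * (c * (1 - x) - x) ^ 2 + 160 * x ^ 2) := by ring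
    _ ≤ 0 := neg_nonpos.2 (by positivity)

end BernsteinCoefficients

theorem Psi_le_320_large_c_general {c x : ℝ} (hc : |c| ≤ 2) (hx0 : 0 ≤ x) (hx1 : x ≤ 1) :
    320 + psi₁ c + psi₂ c * x + psi₃ c * x ^ 2 + psi₄ c * x ^ 3 + psi₅ c * x ^ 4 ≤ 320 := by
  have hb₃ : 4 * psi₁ c + 3 * psi₂ c + 2 * psi₃ c + psi₄ c ≤ 0 :=
    (four_mul_psi₁_add_three_mul_psi₂_add_two_mul_psi₃_add_psi₄_le hc).trans (by norm_num)
  have hquartic :=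
    quartic_nonpos_of_bernstein hx0 hx1 (initial_bernstein_form_nonpos hc hx0 hx1) hb₃
      (sum_psi_nonpos c)
  linarith

theorem Psi_le_320_large_c (c x : ℝ) (hc0 : 4511 / 4000 < c) (hc1 : c ≤ 2)
    (hx0 : 0 ≤ x) (hx1 : x ≤ 1) :
    320 + (-160 * c ^ 2 + 16 * c ^ 3 + 20 * c ^ 4 - 4 * c ^ 5 + (5 / 4) * c ^ 6) +
      (32 * c + 48 * c ^ 2 + 32 * c ^ 3 + 14 * c ^ 4 - 10 * c ^ 5 - (13 / 2) * c ^ 6) * x +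
      (-256 + 64 * c + 276 * c ^ 2 - 48 * c ^ 3 - 82 * c ^ 4 + 8 * c ^ 5 + (29 / 4) * c ^ 6) * x ^ 2 +
      (320 - 32 * c - 272 * c ^ 2 - 32 * c ^ 3 + 76 * c ^ 4 + 10 * c ^ 5 - 7 * c ^ 6) * x ^ 3 +
      (-64 - 64 * c + 48 * c ^ 2 + 32 * c ^ 3 - 12 * c ^ 4 - 4 * c ^ 5 + c ^ 6) * x ^ 4 ≤ 320 :=
  Psi_le_320_large_c_general (abs_le.2 ⟨by linarith, hc1⟩) hx0 hx1
end

section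
/- Let ϑ(c,x,y) = (5/4)c⁶ + (4 - c²)·[ (13/2)c⁴x + 2c⁴x² + (37c² - (37/4)c⁴)x² + (4c² - c⁴)x⁴ + (236/7 + 7(c² - 18/7)²)x³ + (1 - x²)(2c(4 - c²)x(1 + 2x) + 4c³(1 + 3x))y + 4(1 - x²)(3c²x + (4 - c²)(5 + x²))y² + 12(c² + 2(4 - c²)x)(1 - x²)(1 - y²) ]. Then ϑ(c,x,y) ≤ 320 for all real c, x, y with 0 ≤ c ≤ 2, 0 ≤ x ≤ 1 and 0 ≤ y ≤ 1. -/
/-!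
Write `ϑ = (5/4) c⁶ + (4 - c²) R`. Since `5 (4³ - c⁶) = (4 - c²) (80 + 20 c² + 5 c⁴)`, it is
enough to show `R ≤ 80 + 20 c² + 5 c⁴`. Estimating the term `b y` of `R` by `|b| (1 + y²) / 2`
bounds `R` by a convex combination, with weights `1 - y²` and `y²`, of two functions of `c` and `x`
alone. The inequalities `2 |c| x ≤ c² + x²` and `4 |c| ≤ c² + 4` bound these by quadratics in `c²`,
which leaves polynomial inequalities in `x ∈ [0, 1]`.
-/

section OrderedRing

lemma quadratic_nonneg_of_le {K : Type*} [CommRing K] [LinearOrder K] [IsStrictOrderedRing K]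
    {p q r s t : K} (ht : 0 ≤ t) (hts : t ≤ s) (hp : 0 ≤ p) (hq : 0 ≤ q) (hqr : 0 ≤ q + r * s) :
    0 ≤ p + q * t + r * t ^ 2 := by
  have slope_nonneg : 0 ≤ q + r * t := by
    rcases le_total 0 r with hr | hr
    · positivity
    · exact hqr.trans (by gcongr q + ?_; exact mul_le_mul_of_nonpos_left hts hr)
  linear_combination hp + mul_nonneg ht slope_nonneg

lemma quadratic_le_of_abs_le_one {K : Type*} [Field K] [LinearOrder K] [IsStrictOrderedRing K]
    {a b p q M y : K} (hy : |y| ≤ 1) (h_zero : a + |b| / 2 + q ≤ M) (h_one : a + |b| + p ≤ M) :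
    a + b * y + p * y ^ 2 + q * (1 - y ^ 2) ≤ M := by
  have hy_sq : 0 ≤ 1 - y ^ 2 := sub_nonneg.mpr ((sq_le_one_iff_abs_le_one y).mpr hy)
  have h_linear : b * y ≤ |b| * ((1 + y ^ 2) / 2) :=
    calc b * y ≤ |b| * |y| := (le_abs_self _).trans_eq (abs_mul b y)
      _ ≤ |b| * ((1 + y ^ 2) / 2) := by
        gcongr
        linear_combination two_mul_le_add_sq 1 |y| / 2 + sq_abs y / 2
  calc a + b * y + p * y ^ 2 + q * (1 - y ^ 2)
      ≤ (1 - y ^ 2) * (a + |b| / 2 + q) + y ^ 2 * (a + |b| + p) := by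
        linear_combination h_linear
    _ ≤ (1 - y ^ 2) * M + y ^ 2 * M := by gcongr
    _ = M := by ring

end OrderedRing

/-- The part of the bracket in `ϑ` that is free of `y`. -/
noncomputable def varthetaConst (c x : ℝ) : ℝ :=
  (13 / 2) * c ^ 4 * x + 2 * c ^ 4 * x ^ 2 + (37 * c ^ 2 - (37 / 4) * c ^ 4) * x ^ 2 +
    (4 * c ^ 2 - c ^ 4) * x ^ 4 + (236 / 7 + 7 * (c ^ 2 - 18 / 7) ^ 2) * x ^ 3

/-- The coefficient of `y` in the bracket of `ϑ`. -/
def varthetaLin (c x : ℝ) : ℝ :=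
  (1 - x ^ 2) * (2 * c * (4 - c ^ 2) * x * (1 + 2 * x) + 4 * c ^ 3 * (1 + 3 * x))

/-- The coefficient of `y ^ 2` in the bracket of `ϑ`, with the terms in `1 - y ^ 2` kept apart. -/
def varthetaSq (c x : ℝ) : ℝ :=
  4 * (1 - x ^ 2) * (3 * c ^ 2 * x + (4 - c ^ 2) * (5 + x ^ 2))

/-- The coefficient of `1 - y ^ 2` in the bracket of `ϑ`. -/
def varthetaCompl (c x : ℝ) : ℝ :=
  12 * (c ^ 2 + 2 * (4 - c ^ 2) * x) * (1 - x ^ 2)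

/-- The function `ϑ`, with its bracket sorted into powers of `y` and the terms in `1 - y ^ 2`. -/
noncomputable def vartheta (c x y : ℝ) : ℝ :=
  (5 / 4) * c ^ 6 + (4 - c ^ 2) *
    (varthetaConst c x + varthetaLin c x * y + varthetaSq c x * y ^ 2 +
      varthetaCompl c x * (1 - y ^ 2))

/-- A majorant of `|varthetaLin c x|` that is even in `c`: the odd factors `2 * c * x` and `4 * c`
are replaced by `c ^ 2 + x ^ 2` and `c ^ 2 + 4`. -/
def varthetaLinMajorant (c x : ℝ) : ℝ :=
  (1 - x ^ 2) * ((4 - c ^ 2) * (1 + 2 * x) * (c ^ 2 + x ^ 2) + c ^ 2 * (1 + 3 * x) * (c ^ 2 + 4))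

section Bounds

variable {c x y : ℝ}

lemma varthetaLin_neg (c x : ℝ) : varthetaLin (-c) x = -varthetaLin c x := by
  simp only [varthetaLin]
  ring

lemma varthetaLin_le_majorant (hc : c ^ 2 ≤ 4) (hx₀ : 0 ≤ x) (hx₁ : x ≤ 1) :
    varthetaLin c x ≤ varthetaLinMajorant c x := by
  have hx_sq : x ^ 2 ≤ 1 := pow_le_one₀ hx₀ hx₁
  have h_diff : 0 ≤ (1 - x ^ 2) *
      ((4 - c ^ 2) * (1 + 2 * x) * (c - x) ^ 2 + c ^ 2 * (1 + 3 * x) * (c - 2) ^ 2) := by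
    positivity
  simp only [varthetaLin, varthetaLinMajorant]
  linear_combination h_diff

lemma abs_varthetaLin_le_majorant (hc : c ^ 2 ≤ 4) (hx₀ : 0 ≤ x) (hx₁ : x ≤ 1) :
    |varthetaLin c x| ≤ varthetaLinMajorant c x := by
  refine abs_le'.mpr ⟨varthetaLin_le_majorant hc hx₀ hx₁, ?_⟩
  have h_neg := varthetaLin_le_majorant (c := -c) ((neg_sq c).trans_le hc) hx₀ hx₁
  simpa only [varthetaLin_neg, varthetaLinMajorant, neg_sq] using h_neg

lemma varthetaConst_add_half_majorant_add_compl_le (hc : c ^ 2 ≤ 4) (hx₀ : 0 ≤ x) (hx₁ : x ≤ 1) :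
    varthetaConst c x + varthetaLinMajorant c x / 2 + varthetaCompl c x ≤
      80 + 20 * c ^ 2 + 5 * c ^ 4 := by
  have hx_cube : x ^ 3 ≤ 1 := pow_le_one₀ hx₀ hx₁
  have hx_four : x ^ 4 ≤ x ^ 3 := pow_le_pow_of_le_one hx₀ hx₁ (by norm_num)
  have hx_five : x ^ 5 ≤ x ^ 4 := pow_le_pow_of_le_one hx₀ hx₁ (by norm_num)
  have hx_cube_ge : 2 * x ^ 2 - x ≤ x ^ 3 := by
    linear_combination mul_nonneg hx₀ (sq_nonneg (x - 1))
  have h_quadratic : 0 ≤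
      (1 - x) * (80 - 16 * x - 18 * x ^ 2 - 6 * x ^ 3 - 4 * x ^ 4) +
      (4 + 14 * x - 41 / 2 * x ^ 2 + 23 * x ^ 3 - 9 / 2 * x ^ 4 - x ^ 5) * c ^ 2 +
      (5 - 7 * x + 29 / 4 * x ^ 2 - 13 / 2 * x ^ 3 + x ^ 4) * (c ^ 2) ^ 2 := by
    refine quadratic_nonneg_of_le (sq_nonneg c) hc ?_ ?_ ?_
    · exact mul_nonneg (by linarith) (by linarith)
    · linarith [sq_nonneg x]
    · linarith [sq_nonneg x]
  simp only [varthetaConst, varthetaLinMajorant, varthetaCompl]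
  linear_combination h_quadratic

lemma varthetaConst_add_majorant_add_sq_le (hc : c ^ 2 ≤ 4) (hx₀ : 0 ≤ x) (hx₁ : x ≤ 1) :
    varthetaConst c x + varthetaLinMajorant c x + varthetaSq c x ≤
      80 + 20 * c ^ 2 + 5 * c ^ 4 := by
  have hx_sq : x ^ 2 ≤ 1 := pow_le_one₀ hx₀ hx₁
  have hx_four : x ^ 4 ≤ x ^ 3 := pow_le_pow_of_le_one hx₀ hx₁ (by norm_num)
  have hx_five : x ^ 5 ≤ x ^ 4 := pow_le_pow_of_le_one hx₀ hx₁ (by norm_num)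
  have hx_cube_ge : 2 * x ^ 2 - x ≤ x ^ 3 := by
    linear_combination mul_nonneg hx₀ (sq_nonneg (x - 1))
  have h_quadratic : 0 ≤
      4 * x ^ 2 * ((1 - x) * (15 - 7 * x - 2 * x ^ 2)) +
      (32 - 32 * x - 44 * x ^ 2 + 70 * x ^ 3 - 9 * x ^ 4 - 2 * x ^ 5) * c ^ 2 +
      (5 - 15 / 2 * x + 29 / 4 * x ^ 2 - 6 * x ^ 3 + x ^ 4) * (c ^ 2) ^ 2 := by
    refine quadratic_nonneg_of_le (sq_nonneg c) hc ?_ ?_ ?_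
    · exact mul_nonneg (by positivity) (mul_nonneg (by linarith) (by linarith))
    · linarith [sq_nonneg (x - 5 / 8)]
    · linarith [sq_nonneg (x - 4 / 5)]
  simp only [varthetaConst, varthetaLinMajorant, varthetaSq]
  linear_combination h_quadratic

lemma vartheta_bracket_le (hc : c ^ 2 ≤ 4) (hx₀ : 0 ≤ x) (hx₁ : x ≤ 1) (hy : |y| ≤ 1) :
    varthetaConst c x + varthetaLin c x * y + varthetaSq c x * y ^ 2 +
      varthetaCompl c x * (1 - y ^ 2) ≤ 80 + 20 * c ^ 2 + 5 * c ^ 4 := by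
  have h_lin := abs_varthetaLin_le_majorant hc hx₀ hx₁
  apply quadratic_le_of_abs_le_one hy
  · linarith [varthetaConst_add_half_majorant_add_compl_le hc hx₀ hx₁]
  · linarith [varthetaConst_add_majorant_add_sq_le hc hx₀ hx₁]

theorem vartheta_le_320_general (hc : |c| ≤ 2) (hx₀ : 0 ≤ x) (hx₁ : x ≤ 1) (hy : |y| ≤ 1) :
    vartheta c x y ≤ 320 := by
  have hc_sq : c ^ 2 ≤ 4 := by
    rw [← sq_abs]
    exact (pow_le_pow_left₀ (abs_nonneg c) hc 2).trans_eq (by norm_num)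
  calc vartheta c x y
      ≤ (5 / 4) * c ^ 6 + (4 - c ^ 2) * (80 + 20 * c ^ 2 + 5 * c ^ 4) := by
        unfold vartheta
        gcongr _ + _ * ?_
        exact vartheta_bracket_le hc_sq hx₀ hx₁ hy
    _ = 320 - 15 / 4 * c ^ 6 := by ring
    _ ≤ 320 := sub_le_self _ (by positivity)

end Bounds

theorem vartheta_le_320 (c x y : ℝ) (hc0 : 0 ≤ c) (hc1 : c ≤ 2)
    (hx0 : 0 ≤ x) (hx1 : x ≤ 1) (hy0 : 0 ≤ y) (hy1 : y ≤ 1) :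
    (5 / 4) * c ^ 6 + (4 - c ^ 2) *
      ((13 / 2) * c ^ 4 * x + 2 * c ^ 4 * x ^ 2 + (37 * c ^ 2 - (37 / 4) * c ^ 4) * x ^ 2 +
        (4 * c ^ 2 - c ^ 4) * x ^ 4 + (236 / 7 + 7 * (c ^ 2 - 18 / 7) ^ 2) * x ^ 3 +
        (1 - x ^ 2) * (2 * c * (4 - c ^ 2) * x * (1 + 2 * x) + 4 * c ^ 3 * (1 + 3 * x)) * y +
        4 * (1 - x ^ 2) * (3 * c ^ 2 * x + (4 - c ^ 2) * (5 + x ^ 2)) * y ^ 2 +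
        12 * (c ^ 2 + 2 * (4 - c ^ 2) * x) * (1 - x ^ 2) * (1 - y ^ 2)) ≤ 320 :=
  vartheta_le_320_general (abs_le.mpr ⟨by linarith, hc1⟩) hx0 hx1 (abs_le.mpr ⟨by linarith, hy1⟩)
end

section
/- Let ϑ(c,x,y) be as defined below. Then ϑ(c,x,0) ≤ 320 for all real c, x with 0 ≤ c ≤ 2 and 0 ≤ x ≤ 1; explicitly, (5/4)c⁶ + (4 - c²)·( 96x - 16x³ + c⁴((13/2)x - (29/4)x² + 7x³ - x⁴) + c²(12 - 24x + 25x² - 12x³ + 4x⁴) ) ≤ 320. -/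
/-!
On the face `y = 0` the polynomial depends on `c` only through `t = c²`, so let `0 ≤ t ≤ 4`. The
difference between its value at `x = 1` and its value at `x` is `(4 - t) (1 - x)` times a polynomial
that is quadratic in `t`. Bounding the three coefficients of this quadratic below by affine
functions of `x` reduces its nonnegativity to the endpoints `x = -1` and `x = 1`, where it is
checked by completing the square in `t`. Hence the maximum over `x` is attained on the edge `x = 1`,
and there the gap to `320` is `4 t ((t - 2) ^ 2 + 11)`.
-/

section

variable {K : Type*} [Field K]

/-- The polynomial `ϑ(c, x, 0)`, written in terms of `t = c²`. -/
def varthetaFace (t x : K) : K :=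
  (5 / 4) * t ^ 3 + (4 - t) *
    (96 * x - 16 * x ^ 3 + t ^ 2 * ((13 / 2) * x - (29 / 4) * x ^ 2 + 7 * x ^ 3 - x ^ 4) +
      t * (12 - 24 * x + 25 * x ^ 2 - 12 * x ^ 3 + 4 * x ^ 4))

/-- The divided difference of `varthetaFace t` between `x` and `1`, with the factor `4 - t` removed,
as a polynomial in `t`. -/
def varthetaFaceSlope (t x : K) : K :=
  (80 - 16 * x - 16 * x ^ 2) + (-7 + 17 * x - 8 * x ^ 2 + 4 * x ^ 3) * t +
    (21 / 4 - 5 / 4 * x + 6 * x ^ 2 - x ^ 3) * t ^ 2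

theorem varthetaFace_one_sub [CharZero K] (t x : K) :
    varthetaFace t 1 - varthetaFace t x = (4 - t) * (1 - x) * varthetaFaceSlope t x := by
  unfold varthetaFace varthetaFaceSlope
  ring

theorem sub_varthetaFace_one [CharZero K] (t : K) :
    320 - varthetaFace t 1 = 4 * t * ((t - 2) ^ 2 + 11) := by
  unfold varthetaFace
  ring

variable [LinearOrder K] [IsStrictOrderedRing K] {t x : K}

theorem varthetaFaceSlope_nonneg (ht : 0 ≤ t) (hx : |x| ≤ 1) : 0 ≤ varthetaFaceSlope t x := by
  obtain ⟨hx_lower, hx_upper⟩ := abs_le.1 hx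
  have h_const : 64 - 16 * x ≤ 80 - 16 * x - 16 * x ^ 2 := by
    linarith [(sq_le_one_iff_abs_le_one x).2 hx]
  have h_linear : -22 + 14 * x ≤ -7 + 17 * x - 8 * x ^ 2 + 4 * x ^ 3 := by
    have : 0 ≤ (x + 1) * (4 * (x - 3 / 2) ^ 2 + 6) :=
      mul_nonneg (by linarith) (by positivity)
    linarith
  have h_quadratic : 5 ≤ 21 / 4 - 5 / 4 * x + 6 * x ^ 2 - x ^ 3 := by
    have : 0 ≤ x ^ 2 * (1 - x) := mul_nonneg (sq_nonneg x) (by linarith)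
    linarith [sq_nonneg (x - 1 / 8)]
  have h_left : 0 ≤ 80 - 36 * t + 5 * t ^ 2 := by linarith [sq_nonneg (t - 18 / 5)]
  have h_right : 0 ≤ 48 - 8 * t + 5 * t ^ 2 := by linarith [sq_nonneg (t - 4 / 5)]
  calc
    0 ≤ (1 - x) / 2 * (80 - 36 * t + 5 * t ^ 2) + (1 + x) / 2 * (48 - 8 * t + 5 * t ^ 2) :=
      add_nonneg (mul_nonneg (by linarith) h_left) (mul_nonneg (by linarith) h_right)
    _ = (64 - 16 * x) + (-22 + 14 * x) * t + 5 * t ^ 2 := by ring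
    _ ≤ varthetaFaceSlope t x := by
      unfold varthetaFaceSlope
      gcongr

theorem varthetaFace_le_varthetaFace_one (ht0 : 0 ≤ t) (ht4 : t ≤ 4) (hx : |x| ≤ 1) :
    varthetaFace t x ≤ varthetaFace t 1 := by
  rw [← sub_nonneg, varthetaFace_one_sub]
  exact mul_nonneg (mul_nonneg (sub_nonneg.2 ht4) (sub_nonneg.2 (le_of_abs_le hx)))
    (varthetaFaceSlope_nonneg ht0 hx)

theorem varthetaFace_one_le (ht : 0 ≤ t) : varthetaFace t 1 ≤ 320 := by
  rw [← sub_nonneg, sub_varthetaFace_one]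
  positivity

theorem vartheta_face_y_zero_general {c x : K} (hc : |c| ≤ 2) (hx : |x| ≤ 1) :
    (5 / 4) * c ^ 6 + (4 - c ^ 2) *
      (96 * x - 16 * x ^ 3 + c ^ 4 * ((13 / 2) * x - (29 / 4) * x ^ 2 + 7 * x ^ 3 - x ^ 4) +
        c ^ 2 * (12 - 24 * x + 25 * x ^ 2 - 12 * x ^ 3 + 4 * x ^ 4)) ≤ 320 := by
  have hc_sq : c ^ 2 ≤ 4 := by linarith [sq_le_sq' (neg_le_of_abs_le hc) (le_of_abs_le hc)]
  calc
    _ = varthetaFace (c ^ 2) x := by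
      unfold varthetaFace
      ring
    _ ≤ varthetaFace (c ^ 2) 1 := varthetaFace_le_varthetaFace_one (sq_nonneg c) hc_sq hx
    _ ≤ 320 := varthetaFace_one_le (sq_nonneg c)

end

theorem vartheta_face_y_zero (c x : ℝ) (hc0 : 0 ≤ c) (hc1 : c ≤ 2)
    (hx0 : 0 ≤ x) (hx1 : x ≤ 1) :
    (5 / 4) * c ^ 6 + (4 - c ^ 2) *
      (96 * x - 16 * x ^ 3 + c ^ 4 * ((13 / 2) * x - (29 / 4) * x ^ 2 + 7 * x ^ 3 - x ^ 4) +
        c ^ 2 * (12 - 24 * x + 25 * x ^ 2 - 12 * x ^ 3 + 4 * x ^ 4)) ≤ 320 :=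
  vartheta_face_y_zero_general ((abs_of_nonneg hc0).trans_le hc1)
    ((abs_of_nonneg hx0).trans_le hx1)
end

section
/- Let ϑ(c,x,y) be as defined below. Then ϑ(c,0,y) ≤ 320 for all real c, y with 0 ≤ c ≤ 2 and 0 ≤ y ≤ 1; explicitly, (5/4)c⁶ + (4 - c²)·( 4c³y + 20(4 - c²)y² + 12c²(1 - y²) ) ≤ 320. -/
/-!
Since `c * y ≤ 1 + y ^ 2` for `|c| ≤ 2`, the only term of odd degree in `y` can be replaced by one
in `y ^ 2`. For fixed `c` the resulting upper bound is affine in `y ^ 2 ∈ [0, 1]`, so it suffices to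
bound its values at the two endpoints, which are polynomials in `c ^ 2 ∈ [0, 4]`.
-/

theorem pow_succ_le_pow_mul_of_le {R : Type*} [Semiring R] [PartialOrder R] [IsOrderedRing R]
    {a u : R} (hu : 0 ≤ u) (hua : u ≤ a) (n : ℕ) : u ^ (n + 1) ≤ a ^ n * u := by
  rw [pow_succ]
  gcongr

section OrderedCommRing

variable {R : Type*} [CommRing R] [LinearOrder R] [IsStrictOrderedRing R] {c y : R}

theorem mul_le_one_add_sq_of_sq_le_four (hc : c ^ 2 ≤ 4) : c * y ≤ 1 + y ^ 2 := by
  have : 0 ≤ 4 * (1 + y ^ 2 - c * y) := calc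
    0 ≤ (2 * y - c) ^ 2 + (4 - c ^ 2) := add_nonneg (sq_nonneg _) (sub_nonneg.2 hc)
    _ = 4 * (1 + y ^ 2 - c * y) := by ring
  linarith

theorem face_factor_le_affine_sq (hc : c ^ 2 ≤ 4) :
    4 * c ^ 3 * y + 20 * (4 - c ^ 2) * y ^ 2 + 12 * c ^ 2 * (1 - y ^ 2) ≤
      (1 - y ^ 2) * (16 * c ^ 2) + y ^ 2 * (80 - 12 * c ^ 2) := by
  have odd_term : 4 * c ^ 2 * (c * y) ≤ 4 * c ^ 2 * (1 + y ^ 2) := by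
    gcongr
    exact mul_le_one_add_sq_of_sq_le_four hc
  linarith

end OrderedCommRing

section OrderedField

variable {K : Type*} [Field K] [LinearOrder K] [IsStrictOrderedRing K] {u : K}

theorem face_affine_bound_at_zero_le (hu₀ : 0 ≤ u) (hu₄ : u ≤ 4) :
    5 / 4 * u ^ 3 + (4 - u) * (16 * u) ≤ 144 := calc
  _ ≤ 5 / 4 * (4 ^ 2 * u) + (4 - u) * (16 * u) := by
    gcongr
    exact pow_succ_le_pow_mul_of_le hu₀ hu₄ 2
  _ = 20 * u + 64 - 16 * (u - 2) ^ 2 := by ring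
  _ ≤ 144 := by linarith [sq_nonneg (u - 2)]

theorem face_affine_bound_at_one_le (hu₀ : 0 ≤ u) (hu₄ : u ≤ 4) :
    5 / 4 * u ^ 3 + (4 - u) * (80 - 12 * u) ≤ 320 := calc
  _ ≤ 5 / 4 * (4 ^ 2 * u) + (4 - u) * (80 - 12 * u) := by
    gcongr
    exact pow_succ_le_pow_mul_of_le hu₀ hu₄ 2
  _ = 320 - 12 * (u * (9 - u)) := by ring
  _ ≤ 320 := by linarith [mul_nonneg hu₀ (show 0 ≤ 9 - u by linarith)]

theorem vartheta_face_x_zero_general {c y : K} (hc : |c| ≤ 2) (hy : |y| ≤ 1) :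
    (5 / 4) * c ^ 6 + (4 - c ^ 2) *
      (4 * c ^ 3 * y + 20 * (4 - c ^ 2) * y ^ 2 + 12 * c ^ 2 * (1 - y ^ 2)) ≤ 320 := by
  have hc_sq : c ^ 2 ≤ 4 := (sq_le_sq' (abs_le.1 hc).1 (abs_le.1 hc).2).trans_eq (by norm_num)
  have hy_sq : y ^ 2 ≤ 1 := (sq_le_one_iff_abs_le_one y).2 hy
  have : 0 ≤ 4 - c ^ 2 := sub_nonneg.2 hc_sq
  have : 0 ≤ 1 - y ^ 2 := sub_nonneg.2 hy_sq
  calc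
    _ ≤ 5 / 4 * c ^ 6 +
          (4 - c ^ 2) * ((1 - y ^ 2) * (16 * c ^ 2) + y ^ 2 * (80 - 12 * c ^ 2)) := by
      gcongr _ + _ * ?_
      exact face_factor_le_affine_sq hc_sq
    _ = (1 - y ^ 2) * (5 / 4 * (c ^ 2) ^ 3 + (4 - c ^ 2) * (16 * c ^ 2)) +
          y ^ 2 * (5 / 4 * (c ^ 2) ^ 3 + (4 - c ^ 2) * (80 - 12 * c ^ 2)) := by ring
    _ ≤ (1 - y ^ 2) * 144 + y ^ 2 * 320 := by
      gcongr
      · exact face_affine_bound_at_zero_le (sq_nonneg c) hc_sq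
      · exact face_affine_bound_at_one_le (sq_nonneg c) hc_sq
    _ ≤ 320 := by linarith

end OrderedField

theorem vartheta_face_x_zero (c y : ℝ) (hc0 : 0 ≤ c) (hc1 : c ≤ 2)
    (hy0 : 0 ≤ y) (hy1 : y ≤ 1) :
    (5 / 4) * c ^ 6 + (4 - c ^ 2) *
      (4 * c ^ 3 * y + 20 * (4 - c ^ 2) * y ^ 2 + 12 * c ^ 2 * (1 - y ^ 2)) ≤ 320 :=
  vartheta_face_x_zero_general ((abs_of_nonneg hc0).trans_le hc1) ((abs_of_nonneg hy0).trans_le hy1)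
end

section
/- Let ϑ(c,x,y) be as defined below. Then ϑ(0,x,y) ≤ 320 for all real x, y with 0 ≤ x ≤ 1 and 0 ≤ y ≤ 1; explicitly, 384x - 64x³ + (320 - 384x - 256x² + 384x³ - 64x⁴)y² ≤ 320. -/
/-! In `y` the left-hand side is affine in `t = y ^ 2 ∈ [0, 1]`, so it is enough to bound it at
`t = 0` and `t = 1`. There its distance from `320` factors as `64 (1 - x) (5 - x - x ^ 2)` and
`64 x ^ 2 (1 - x) (4 - x)`, respectively. -/

section

variable {R : Type*} [CommRing R] [LinearOrder R] [IsStrictOrderedRing R] {x y : R}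

lemma vartheta_edge_y_zero_le (hx : x ≤ 1) (hx' : x + x ^ 2 ≤ 5) :
    384 * x - 64 * x ^ 3 ≤ 320 := by
  have gap : 0 ≤ 64 * ((1 - x) * (5 - (x + x ^ 2))) :=
    mul_nonneg (by norm_num) (mul_nonneg (sub_nonneg.2 hx) (sub_nonneg.2 hx'))
  linear_combination gap

lemma vartheta_edge_y_one_le (hx : x ≤ 1) :
    384 * x - 64 * x ^ 3 +
      (320 - 384 * x - 256 * x ^ 2 + 384 * x ^ 3 - 64 * x ^ 4) ≤ 320 := by
  have hx4 : 0 ≤ 4 - x := by linarith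
  have gap : 0 ≤ 64 * (x ^ 2 * ((1 - x) * (4 - x))) :=
    mul_nonneg (by norm_num) (mul_nonneg (sq_nonneg x) (mul_nonneg (sub_nonneg.2 hx) hx4))
  linear_combination gap

theorem vartheta_face_c_zero_general (hx : x ≤ 1) (hx' : x + x ^ 2 ≤ 5) (hy : |y| ≤ 1) :
    384 * x - 64 * x ^ 3 +
      (320 - 384 * x - 256 * x ^ 2 + 384 * x ^ 3 - 64 * x ^ 4) * y ^ 2 ≤ 320 := by
  have hy_sq : y ^ 2 ∈ Set.Icc 0 1 := ⟨sq_nonneg y, (sq_le_one_iff_abs_le_one y).2 hy⟩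
  have affine_le := (convex_Iic (𝕜 := R) (320 : R)).add_smul_mem
    (vartheta_edge_y_zero_le hx hx') (vartheta_edge_y_one_le hx) hy_sq
  simpa only [smul_eq_mul, mul_comm (y ^ 2), Set.mem_Iic] using affine_le

end

theorem vartheta_face_c_zero (x y : ℝ) (hx0 : 0 ≤ x) (hx1 : x ≤ 1)
    (hy0 : 0 ≤ y) (hy1 : y ≤ 1) :
    384 * x - 64 * x ^ 3 +
      (320 - 384 * x - 256 * x ^ 2 + 384 * x ^ 3 - 64 * x ^ 4) * y ^ 2 ≤ 320 :=
  vartheta_face_c_zero_general hx1 (by linarith [pow_le_one₀ (n := 2) hx0 hx1])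
    (abs_le.2 ⟨by linarith, hy1⟩)
end
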